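/- ψ(1/12) = −γ − ln 24 − (2 + √3)·(π/2) + √3·ln(2 − √3) − ln √3, where ψ is the digamma function and γ is the Euler–Mascheroni constant. -/

import Mathlib

noncomputable def digamma (x : ℝ) : ℝ := deriv Real.Gamma x / Real.Gamma x

lemma dg_deriv_log {x : ℝ} (hx : 0 < x) : HasDerivAt (Real.log ∘ Real.Gamma) (digamma x) x := by
  have hd : DifferentiableAt ℝ Real.Gamma x :=
    Real.differentiableAt_Gamma (fun m => by
      have : (0:ℝ) ≤ m := m.cast_nonneg
      intro h; linarith)
  exact hd.hasDerivAt.log (Real.Gamma_pos_of_pos hx).ne'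

lemma dg_mono {x y : ℝ} (hx : 0 < x) (hxy : x ≤ y) : digamma x ≤ digamma y := by
  have h := Real.convexOn_log_Gamma.monotoneOn_deriv
    (fun x hx => (dg_deriv_log hx).differentiableAt) hx (lt_of_lt_of_le hx hxy) hxy
  rwa [(dg_deriv_log hx).deriv, (dg_deriv_log (lt_of_lt_of_le hx hxy)).deriv] at h

lemma dg_add_one {x : ℝ} (hx : 0 < x) : digamma (x + 1) = digamma x + 1 / x := by
  have h1 : HasDerivAt (fun y => (Real.log ∘ Real.Gamma) (y + 1)) (digamma (x + 1)) x :=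
    (dg_deriv_log (by linarith : 0 < x + 1)).comp_add_const x 1
  have h2 : HasDerivAt (fun y => (Real.log ∘ Real.Gamma) y + Real.log y) (digamma x + x⁻¹) x :=
    (dg_deriv_log hx).add (Real.hasDerivAt_log hx.ne')
  have h3 : (fun y => (Real.log ∘ Real.Gamma) (y + 1)) =ᶠ[nhds x]
      (fun y => (Real.log ∘ Real.Gamma) y + Real.log y) := by
    filter_upwards [lt_mem_nhds hx] with y hy
    simp only [Function.comp]
    rw [Real.Gamma_add_one hy.ne', Real.log_mul hy.ne' (Real.Gamma_pos_of_pos hy).ne', add_comm]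
  rw [one_div]
  exact h1.unique (h2.congr_of_eventuallyEq h3)

lemma dg_add_nat {x : ℝ} (hx : 0 < x) (N : ℕ) :
    digamma (x + N) = digamma x + ∑ k ∈ Finset.range N, 1 / (x + k) := by
  induction N with
  | zero => simp
  | succ n ih =>
    have : (0:ℝ) ≤ n := n.cast_nonneg
    rw [Finset.sum_range_succ, Nat.cast_succ, ← add_assoc, dg_add_one (by positivity), ih]
    ring

lemma dg_one : digamma 1 = -Real.eulerMascheroniConstant := by
  simp [digamma, Real.hasDerivAt_Gamma_one.deriv]

lemma dg_squeeze (N : ℕ) :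
    digamma (1 / 12) + Real.eulerMascheroniConstant ≤
        ∑ k ∈ Finset.range (N + 1), (1 / (1 + (k:ℝ)) - 1 / (1 / 12 + k)) ∧
    ∑ k ∈ Finset.range (N + 1), (1 / (1 + (k:ℝ)) - 1 / (1 / 12 + k)) - 1 / (1 + (N:ℝ)) ≤
      digamma (1 / 12) + Real.eulerMascheroniConstant := by
  have hN : (0:ℝ) ≤ N := N.cast_nonneg
  have h1 := dg_add_nat (x := 1 / 12) (by norm_num) (N + 1)
  have h2 := dg_add_nat (x := 1) (by norm_num) (N + 1)
  have h3 := dg_add_nat (x := 1) (by norm_num) N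
  have h4 : digamma (1 / 12 + (N + 1 : ℕ)) ≤ digamma (1 + (N + 1 : ℕ)) :=
    dg_mono (by positivity) (by norm_num)
  have h5 : digamma (1 + N) ≤ digamma (1 / 12 + (N + 1 : ℕ)) :=
    dg_mono (by positivity) (by push_cast; linarith)
  rw [dg_one] at h2 h3
  rw [Finset.sum_sub_distrib]
  have h6 := Finset.sum_range_succ (fun k : ℕ => 1 / (1 + (k:ℝ))) N
  constructor <;> linarith

noncomputable def dgF (u : ℝ) : ℝ :=
  -12 * (∑ i ∈ Finset.range 11, u ^ i) / (∑ i ∈ Finset.range 12, u ^ i)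

lemma dgP_pos {u : ℝ} (hu : 0 ≤ u) : 0 < ∑ i ∈ Finset.range 12, u ^ i := by
  rw [Finset.sum_range_succ']
  positivity

lemma dgF_cont : ContinuousOn dgF (Set.uIcc 0 1) := by
  rw [Set.uIcc_of_le zero_le_one]
  unfold dgF
  apply ContinuousOn.div (by fun_prop) (by fun_prop)
  intro u hu
  exact (dgP_pos hu.1).ne'

lemma dgF_bound {u : ℝ} (hu : 0 ≤ u) : -12 ≤ dgF u ∧ dgF u ≤ 0 := by
  unfold dgF
  have hP := dgP_pos hu
  have hQ : 0 ≤ ∑ i ∈ Finset.range 11, u ^ i := by positivity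
  have h := Finset.sum_range_succ (fun i => u ^ i) 11
  have h11 : 0 ≤ u ^ 11 := by positivity
  constructor
  · rw [le_div_iff₀ hP]; norm_num at h; linarith
  · apply div_nonpos_of_nonpos_of_nonneg _ hP.le
    linarith

lemma dgF_sum {u : ℝ} (hu : 0 ≤ u) (N : ℕ) :
    ∑ k ∈ Finset.range N, (12 * u ^ (12 * k + 11) - 12 * u ^ (12 * k)) =
      dgF u * (1 - u ^ (12 * N)) := by
  have hP := dgP_pos hu
  induction N with
  | zero => simp
  | succ n ih =>
    rw [Finset.sum_range_succ, ih]
    have : dgF u * (1 - u ^ 12) = 12 * u ^ 11 - 12 := by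
      unfold dgF
      rw [div_mul_eq_mul_div, div_eq_iff hP.ne']
      simp only [Finset.sum_range_succ, Finset.sum_range_zero]
      ring
    have e : u ^ (12 * (n + 1)) = u ^ (12 * n) * u ^ 12 := by ring
    rw [e]
    linear_combination (-u ^ (12 * n)) * this

open MeasureTheory intervalIntegral in
lemma dg_int (N : ℕ) :
    ∑ k ∈ Finset.range N, (1 / (1 + (k:ℝ)) - 1 / (1 / 12 + k)) =
      ∫ u in (0:ℝ)..1, dgF u * (1 - u ^ (12 * N)) := by
  have : ∫ u in (0:ℝ)..1, dgF u * (1 - u ^ (12 * N)) =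
      ∫ u in (0:ℝ)..1, ∑ k ∈ Finset.range N, (12 * u ^ (12 * k + 11) - 12 * u ^ (12 * k)) := by
    apply integral_congr
    intro u hu
    rw [Set.uIcc_of_le zero_le_one] at hu
    exact (dgF_sum hu.1 N).symm
  rw [this, intervalIntegral.integral_finsetSum]
  · apply Finset.sum_congr rfl
    intro k _
    rw [intervalIntegral.integral_sub (by apply Continuous.intervalIntegrable; fun_prop)
      (by apply Continuous.intervalIntegrable; fun_prop), intervalIntegral.integral_const_mul, intervalIntegral.integral_const_mul,
      integral_pow, integral_pow]
    have : (0:ℝ) ≤ k := k.cast_nonneg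
    push_cast
    simp
    field_simp
    ring
  · intro k _
    apply Continuous.intervalIntegrable; fun_prop

open MeasureTheory intervalIntegral in
lemma dg_err (N : ℕ) :
    (∫ u in (0:ℝ)..1, dgF u) ≤ ∫ u in (0:ℝ)..1, dgF u * (1 - u ^ (12 * N)) ∧
    (∫ u in (0:ℝ)..1, dgF u * (1 - u ^ (12 * N))) ≤ (∫ u in (0:ℝ)..1, dgF u) + 12 / (12 * N + 1) := by
  have hi := dgF_cont.intervalIntegrable (μ := volume)
  have hi2 : IntervalIntegrable (fun u => dgF u * (1 - u ^ (12 * N))) volume 0 1 :=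
    (dgF_cont.mul (by fun_prop)).intervalIntegrable
  have hi3 : IntervalIntegrable (fun u : ℝ => 12 * u ^ (12 * N)) volume 0 1 := by
    apply Continuous.intervalIntegrable; fun_prop
  constructor
  · apply integral_mono_on zero_le_one hi hi2
    intro u hu
    have := dgF_bound hu.1
    have h2 : 0 ≤ u ^ (12 * N) := pow_nonneg hu.1 _
    nlinarith
  · have e : (12:ℝ) / (12 * N + 1) = ∫ u in (0:ℝ)..1, 12 * u ^ (12 * N) := by
      rw [intervalIntegral.integral_const_mul, integral_pow]
      push_cast
      simp
      rfl
    rw [e, ← intervalIntegral.integral_add hi hi3]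
    apply integral_mono_on zero_le_one hi2 (hi.add hi3)
    intro u hu
    have := dgF_bound hu.1
    have h2 : 0 ≤ u ^ (12 * N) := pow_nonneg hu.1 _
    nlinarith

open Filter Topology in
lemma dg_eq_int : digamma (1 / 12) + Real.eulerMascheroniConstant = ∫ u in (0:ℝ)..1, dgF u := by
  have t1 : Tendsto (fun N : ℕ => (1:ℝ) / (N + 1)) atTop (𝓝 0) :=
    tendsto_one_div_add_atTop_nhds_zero_nat
  have key : ∀ N : ℕ, |digamma (1 / 12) + Real.eulerMascheroniConstant - ∫ u in (0:ℝ)..1, dgF u|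
      ≤ 12 * (1 / ((N:ℝ) + 1)) := by
    intro N
    have hN : (0:ℝ) ≤ N := N.cast_nonneg
    obtain ⟨a, b⟩ := dg_squeeze N
    obtain ⟨c, d⟩ := dg_err (N + 1)
    rw [dg_int] at a b
    have e1 : (12:ℝ) / (12 * (N + 1 : ℕ) + 1) ≤ 12 * (1 / ((N:ℝ) + 1)) := by
      rw [mul_one_div]; gcongr; push_cast; linarith
    have e2 : 1 / (1 + (N:ℝ)) = 1 / ((N:ℝ) + 1) := by rw [add_comm]
    have e3 : 0 ≤ 1 / ((N:ℝ) + 1) := by positivity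
    rw [abs_le]
    constructor <;> linarith
  have t2 := t1.const_mul 12
  rw [mul_zero] at t2
  have := ge_of_tendsto' t2 key
  have := abs_nonpos_iff.1 this
  linarith

noncomputable def dgT (t u : ℝ) : ℝ :=
  (Real.cos t - 1) * Real.log (u ^ 2 - 2 * Real.cos t * u + 1)
    - 2 * Real.sin t * Real.arctan ((u - Real.cos t) / Real.sin t)

lemma dgq_pos {t : ℝ} (ht : 0 < Real.sin t) (u : ℝ) : 0 < u ^ 2 - 2 * Real.cos t * u + 1 := by
  nlinarith [Real.sin_sq_add_cos_sq t, sq_nonneg (u - Real.cos t), pow_pos ht 2]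

lemma dgT_deriv {t : ℝ} (ht : 0 < Real.sin t) (u : ℝ) :
    HasDerivAt (dgT t) (2 * (Real.cos t - 1) * (u + 1) / (u ^ 2 - 2 * Real.cos t * u + 1)) u := by
  have hq := dgq_pos ht u
  have hsc := Real.sin_sq_add_cos_sq t
  unfold dgT
  have h1 : HasDerivAt (fun u : ℝ => u ^ 2 - 2 * Real.cos t * u + 1) (2 * u - 2 * Real.cos t) u := by
    have := (((hasDerivAt_pow 2 u).sub ((hasDerivAt_id u).const_mul (2 * Real.cos t))).add_const 1)
    refine this.congr_deriv ?_
    norm_num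
  have h2 : HasDerivAt (fun u : ℝ => (u - Real.cos t) / Real.sin t) (1 / Real.sin t) u :=
    ((hasDerivAt_id u).sub_const _).div_const _
  have h3 := ((h1.log hq.ne').const_mul (Real.cos t - 1)).sub
    (h2.arctan.const_mul (2 * Real.sin t))
  refine h3.congr_deriv ?_
  have e : 1 + ((u - Real.cos t) / Real.sin t) ^ 2
      = (u ^ 2 - 2 * Real.cos t * u + 1) / Real.sin t ^ 2 := by
    rw [eq_div_iff (by positivity)]
    field_simp
    linear_combination hsc
  rw [e]
  obtain ⟨q, hq'⟩ : ∃ q, q = u ^ 2 - 2 * Real.cos t * u + 1 := ⟨_, rfl⟩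
  rw [← hq'] at hq ⊢
  field_simp
  first
  | linear_combination (-2) * hsc
  | linear_combination (-1) * hsc

lemma dgT_eval {t : ℝ} (h0 : 0 < t) (h1 : t < Real.pi) :
    dgT t 1 - dgT t 0 = (Real.cos t - 1) * Real.log (2 - 2 * Real.cos t)
      - Real.sin t * (Real.pi - t) := by
  have hs := Real.sin_pos_of_pos_of_lt_pi h0 h1
  have a1 : Real.arctan ((1 - Real.cos t) / Real.sin t) = t / 2 := by
    apply Real.arctan_eq_of_tan_eq _ ⟨by linarith, by linarith⟩
    have hc : 0 < Real.cos (t / 2) := Real.cos_pos_of_mem_Ioo ⟨by linarith, by linarith⟩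
    have hs2 := Real.sin_sq_add_cos_sq (t / 2)
    have e1 : Real.cos t = 2 * Real.cos (t / 2) ^ 2 - 1 := by
      rw [← Real.cos_two_mul]; ring_nf
    have e2 : Real.sin t = 2 * Real.sin (t / 2) * Real.cos (t / 2) := by
      rw [← Real.sin_two_mul]; ring_nf
    rw [Real.tan_eq_sin_div_cos, div_eq_div_iff hc.ne' hs.ne', e1, e2]
    linear_combination (2 * Real.cos (t / 2)) * hs2
  have a0 : Real.arctan ((0 - Real.cos t) / Real.sin t) = t - Real.pi / 2 := by
    apply Real.arctan_eq_of_tan_eq _ ⟨by linarith, by linarith⟩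
    rw [Real.tan_eq_sin_div_cos, Real.sin_sub_pi_div_two, Real.cos_sub_pi_div_two]
    simp
  unfold dgT
  rw [a1, a0]
  have : (1:ℝ) ^ 2 - 2 * Real.cos t * 1 + 1 = 2 - 2 * Real.cos t := by ring
  rw [this]
  simp
  ring

lemma dg_cs : Real.cos (2 * Real.pi / 3) = -(1 / 2) ∧ Real.sin (2 * Real.pi / 3) = √3 / 2 ∧
    Real.cos (5 * Real.pi / 6) = -(√3 / 2) ∧ Real.sin (5 * Real.pi / 6) = 1 / 2 := by
  have e1 : 2 * Real.pi / 3 = Real.pi - Real.pi / 3 := by ring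
  have e2 : 5 * Real.pi / 6 = Real.pi - Real.pi / 6 := by ring
  rw [e1, e2]
  simp

lemma dg_pf {u : ℝ} (hu : 0 ≤ u) : dgF u = -2 / (u + 1)
    + 2 * (√3 / 2 - 1) * (u + 1) / (u ^ 2 - 2 * (√3 / 2) * u + 1)
    + 2 * (1 / 2 - 1) * (u + 1) / (u ^ 2 - 2 * (1 / 2) * u + 1)
    + 2 * (0 - 1) * (u + 1) / (u ^ 2 - 2 * 0 * u + 1)
    + 2 * (-(1 / 2) - 1) * (u + 1) / (u ^ 2 - 2 * (-(1 / 2)) * u + 1)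
    + 2 * (-(√3 / 2) - 1) * (u + 1) / (u ^ 2 - 2 * (-(√3 / 2)) * u + 1) := by
  have hr : √3 ^ 2 = 3 := Real.sq_sqrt (by norm_num)
  have hP := dgP_pos hu
  have q1 : 0 < u ^ 2 - 2 * (√3 / 2) * u + 1 := by nlinarith [sq_nonneg (u - √3 / 2)]
  have q5 : 0 < u ^ 2 - 2 * (-(√3 / 2)) * u + 1 := by nlinarith [sq_nonneg (u + √3 / 2)]
  have q2 : 0 < u ^ 2 - u + 1 := by nlinarith [sq_nonneg (u - 1 / 2)]
  have q4 : 0 < u ^ 2 + u + 1 := by positivity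
  have q3 : 0 < u ^ 2 + 1 := by positivity
  have q15 : 0 < u ^ 4 - u ^ 2 + 1 := by nlinarith [sq_nonneg (u ^ 2 - 1 / 2)]
  have s15 : 2 * (√3 / 2 - 1) * (u + 1) / (u ^ 2 - 2 * (√3 / 2) * u + 1)
      + 2 * (-(√3 / 2) - 1) * (u + 1) / (u ^ 2 - 2 * (-(√3 / 2)) * u + 1)
      = 2 * (u + 1) * (-2 * u ^ 2 + 3 * u - 2) / (u ^ 4 - u ^ 2 + 1) := by
    have : u ^ 4 - u ^ 2 + 1 =
      (u ^ 2 - 2 * (√3 / 2) * u + 1) * (u ^ 2 - 2 * (-(√3 / 2)) * u + 1) := by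
      linear_combination u ^ 2 * hr
    rw [div_add_div _ _ q1.ne' q5.ne', ← this]
    congr 1
    linear_combination 2 * (u + 1) * u * hr
  have hPf : ∑ i ∈ Finset.range 12, u ^ i =
      (u + 1) * (u ^ 2 - u + 1) * (u ^ 2 + 1) * (u ^ 2 + u + 1) * (u ^ 4 - u ^ 2 + 1) := by
    simp only [Finset.sum_range_succ, Finset.sum_range_zero]
    ring
  have c2 : u ^ 2 - 2 * (1 / 2) * u + 1 = u ^ 2 - u + 1 := by ring
  have c3 : u ^ 2 - 2 * 0 * u + 1 = u ^ 2 + 1 := by ring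
  have c4 : u ^ 2 - 2 * (-(1 / 2)) * u + 1 = u ^ 2 + u + 1 := by ring
  have : dgF u = -2 / (u + 1) + 2 * (u + 1) * (-2 * u ^ 2 + 3 * u - 2) / (u ^ 4 - u ^ 2 + 1)
    + -1 * (u + 1) / (u ^ 2 - u + 1)
    + -2 * (u + 1) / (u ^ 2 + 1)
    + -3 * (u + 1) / (u ^ 2 + u + 1) := by
    unfold dgF
    rw [hPf]
    have q0 : 0 < u + 1 := by linarith
    simp only [Finset.sum_range_succ, Finset.sum_range_zero]
    obtain ⟨a, ha⟩ : ∃ a, a = u ^ 2 - u + 1 := ⟨_, rfl⟩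
    obtain ⟨b, hb⟩ : ∃ b, b = u ^ 4 - u ^ 2 + 1 := ⟨_, rfl⟩
    rw [← ha] at q2 ⊢
    rw [← hb] at q15 ⊢
    field_simp
    rw [ha, hb]
    ring
  rw [this, ← s15, c2, c3, c4]
  ring

lemma dg_int_eval : ∫ u in (0:ℝ)..1, dgF u =
    - Real.log 24 - (2 + √3) * (Real.pi / 2) + √3 * Real.log (2 - √3) - Real.log (√3) := by
  have hp := Real.pi_pos
  obtain ⟨c4, s4, c5, s5⟩ := dg_cs
  have hr : √3 ^ 2 = 3 := Real.sq_sqrt (by norm_num)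
  have hr0 : 0 < √3 := by positivity
  have hr2 : √3 < 2 := by nlinarith
  have hd : ∀ u ∈ Set.uIcc (0:ℝ) 1, HasDerivAt (fun u => -2 * Real.log (u + 1) + dgT (Real.pi / 6) u
      + dgT (Real.pi / 3) u + dgT (Real.pi / 2) u + dgT (2 * Real.pi / 3) u
      + dgT (5 * Real.pi / 6) u) (dgF u) u := by
    intro u hu
    rw [Set.uIcc_of_le zero_le_one] at hu
    have h0 : HasDerivAt (fun u : ℝ => -2 * Real.log (u + 1)) (-2 / (u + 1)) u := by
      have := (((hasDerivAt_id u).add_const 1).log (by have := hu.1; simp; linarith)).const_mul (-2)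
      refine this.congr_deriv ?_
      simp only [id]; ring
    have h1 := dgT_deriv (t := Real.pi / 6) (by simp) u
    have h2 := dgT_deriv (t := Real.pi / 3) (by simp) u
    have h3 := dgT_deriv (t := Real.pi / 2) (by simp) u
    have h4 := dgT_deriv (t := 2 * Real.pi / 3) (by rw [s4]; positivity) u
    have h5 := dgT_deriv (t := 5 * Real.pi / 6) (by rw [s5]; positivity) u
    rw [Real.cos_pi_div_six] at h1
    rw [Real.cos_pi_div_three] at h2
    rw [Real.cos_pi_div_two] at h3
    rw [c4] at h4
    rw [c5] at h5
    rw [dg_pf hu.1]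
    exact ((((h0.add h1).add h2).add h3).add h4).add h5
  rw [intervalIntegral.integral_eq_sub_of_hasDerivAt hd dgF_cont.intervalIntegrable]
  have e1 := dgT_eval (t := Real.pi / 6) (by linarith) (by linarith)
  have e2 := dgT_eval (t := Real.pi / 3) (by linarith) (by linarith)
  have e3 := dgT_eval (t := Real.pi / 2) (by linarith) (by linarith)
  have e4 := dgT_eval (t := 2 * Real.pi / 3) (by linarith) (by linarith)
  have e5 := dgT_eval (t := 5 * Real.pi / 6) (by linarith) (by linarith)
  rw [Real.cos_pi_div_six, Real.sin_pi_div_six,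
    show 2 - 2 * (√3 / 2) = 2 - √3 by ring] at e1
  rw [Real.cos_pi_div_three, Real.sin_pi_div_three,
    show (2:ℝ) - 2 * (1 / 2) = 1 by norm_num, Real.log_one] at e2
  rw [Real.cos_pi_div_two, Real.sin_pi_div_two,
    show (2:ℝ) - 2 * 0 = 2 by norm_num] at e3
  rw [c4, s4, show (2:ℝ) - 2 * (-(1 / 2)) = 3 by norm_num] at e4
  have l5 : Real.log (2 + √3) = - Real.log (2 - √3) := by
    rw [← Real.log_inv]
    congr 1
    apply eq_inv_of_mul_eq_one_left
    linear_combination -hr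
  rw [c5, s5, show 2 - 2 * (-(√3 / 2)) = 2 + √3 by ring, l5] at e5
  have l24 : Real.log 24 = 3 * Real.log 2 + Real.log 3 := by
    rw [show (24:ℝ) = 2 ^ 3 * 3 by norm_num, Real.log_mul (by norm_num) (by norm_num), Real.log_pow]
    norm_num
  have l3 : Real.log (√3) = Real.log 3 / 2 := Real.log_sqrt (by norm_num)
  rw [l24, l3]
  norm_num only [zero_add, Real.log_one]
  linear_combination e1 + e2 + e3 + e4 + e5

theorem digamma_one_twelfth :
    digamma (1 / 12) =
      -Real.eulerMascheroniConstant - Real.log 24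
        - (2 + Real.sqrt 3) * (Real.pi / 2)
        + Real.sqrt 3 * Real.log (2 - Real.sqrt 3) - Real.log (Real.sqrt 3) := by
  have h := dg_eq_int
  rw [dg_int_eval] at h
  linarith
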